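/- Let σ² > 0 and ε > 0 be real numbers. Then: (i) for every real P ≥ 0, if klDiv (gaussianReal 0 (P+σ²)) (gaussianReal 0 σ²) ≤ ENNReal.ofReal (2*ε²) then klDiv (gaussianReal 0 σ²) (gaussianReal 0 (P+σ²)) ≤ ENNReal.ofReal (2*ε²); consequently (ii) the set {P : ℝ | P ≥ 0 ∧ klDiv (gaussianReal 0 (P+σ²)) (gaussianReal 0 σ²) ≤ ENNReal.ofReal (2*ε²)} is a subset of {P : ℝ | P ≥ 0 ∧ klDiv (gaussianReal 0 σ²) (gaussianReal 0 (P+σ²)) ≤ ENNReal.ofReal (2*ε²)}, so the supremum of transmit powers feasible under the constraint D(p₀‖p₁) ≤ 2ε² is at least the supremum of transmit powers feasible under D(p₁‖p₀) ≤ 2ε². -/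

import Mathlib

open MeasureTheory ProbabilityTheory
open scoped ENNReal NNReal Classical

/-- Kullback–Leibler divergence of `μ` from `ν`: `∫ log (dμ/dν) dμ` when `μ ≪ ν` and the
log-likelihood ratio is `μ`-integrable, and `∞` otherwise. -/
noncomputable def klDiv {α : Type*} [MeasurableSpace α] (μ ν : Measure α) : ℝ≥0∞ :=
  if μ ≪ ν ∧ Integrable (llr μ ν) μ then ENNReal.ofReal (∫ x, llr μ ν x ∂μ) else ⊤

/-- The log-likelihood ratio of two centered nondegenerate Gaussians is a quadratic polynomial. -/
lemma llr_gaussianReal_zero_ae_eq {a b : ℝ≥0} (ha : a ≠ 0) (hb : b ≠ 0) :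
    llr (gaussianReal 0 a) (gaussianReal 0 b) =ᵐ[gaussianReal 0 a]
      fun x ↦ (Real.log b - Real.log a) / 2 + ((b : ℝ)⁻¹ - (a : ℝ)⁻¹) / 2 * x ^ 2 := by
  have hab : gaussianReal 0 a ≪ gaussianReal 0 b :=
    (gaussianReal_absolutelyContinuous 0 ha).trans (gaussianReal_absolutelyContinuous' 0 hb)
  have hdiv := hab (Measure.rnDeriv_eq_div (gaussianReal_absolutelyContinuous 0 ha)
    (gaussianReal_absolutelyContinuous 0 hb))
  have hac := gaussianReal_absolutelyContinuous 0 ha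
  filter_upwards [hdiv, hac (rnDeriv_gaussianReal 0 a), hac (rnDeriv_gaussianReal 0 b)]
    with x hx hxa hxb
  have hlog (v : ℝ≥0) (hv : v ≠ 0) : Real.log (gaussianPDFReal 0 v x) =
      -((Real.log (2 * Real.pi) + Real.log v) / 2) - (v : ℝ)⁻¹ / 2 * x ^ 2 := by
    have hv' : (0 : ℝ) < v := by positivity
    rw [gaussianPDFReal, Real.log_mul (by positivity) (by positivity), Real.log_inv,
      Real.log_sqrt (by positivity), Real.log_exp, Real.log_mul (by positivity) (by positivity)]
    field_simp
    ring
  rw [llr, hx, hxa, hxb, ENNReal.toReal_div, toReal_gaussianPDF, toReal_gaussianPDF,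
    Real.log_div (gaussianPDFReal_pos 0 a x ha).ne' (gaussianPDFReal_pos 0 b x hb).ne',
    hlog a ha, hlog b hb]
  ring

lemma integrable_sq_gaussianReal (μ : ℝ) (v : ℝ≥0) :
    Integrable (fun x ↦ x ^ 2) (gaussianReal μ v) :=
  (memLp_id_gaussianReal 2).integrable_sq

lemma integral_sq_gaussianReal_zero (v : ℝ≥0) : ∫ x, x ^ 2 ∂gaussianReal 0 v = v := by
  simpa [variance_eq_integral measurable_id'.aemeasurable] using
    variance_fun_id_gaussianReal (μ := 0) (v := v)

/-- Closed form of the divergence between two centered nondegenerate Gaussians. -/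
lemma klDiv_gaussianReal_zero {a b : ℝ≥0} (ha : a ≠ 0) (hb : b ≠ 0) :
    klDiv (gaussianReal 0 a) (gaussianReal 0 b) =
      ENNReal.ofReal ((Real.log b - Real.log a + a / b - 1) / 2) := by
  have hllr := llr_gaussianReal_zero_ae_eq ha hb
  have hsq := (integrable_sq_gaussianReal 0 a).const_mul (((b : ℝ)⁻¹ - (a : ℝ)⁻¹) / 2)
  have hint : Integrable (llr (gaussianReal 0 a) (gaussianReal 0 b)) (gaussianReal 0 a) :=
    ((integrable_const _).add hsq).congr hllr.symm
  rw [klDiv, if_pos ⟨(gaussianReal_absolutelyContinuous 0 ha).trans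
    (gaussianReal_absolutelyContinuous' 0 hb), hint⟩, integral_congr_ae hllr,
    integral_add (integrable_const _) hsq, integral_const_mul, integral_sq_gaussianReal_zero]
  have ha' : (a : ℝ) ≠ 0 := by exact_mod_cast ha
  have hb' : (b : ℝ) ≠ 0 := by exact_mod_cast hb
  congr 1
  simp only [integral_const, probReal_univ, one_smul]
  field_simp
  ring

lemma two_mul_log_le_sub_inv {r : ℝ} (hr : 1 ≤ r) : 2 * Real.log r ≤ r - r⁻¹ := by
  have h := Real.self_le_sinh_iff.2 (Real.log_nonneg hr)
  rw [Real.sinh_log (by positivity)] at h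
  linarith

/-- For centered Gaussians, the divergence of the narrower from the wider one is at most the
divergence of the wider from the narrower one. -/
lemma klDiv_gaussianReal_zero_le_of_le {a b : ℝ≥0} (ha : a ≠ 0) (hab : a ≤ b) :
    klDiv (gaussianReal 0 a) (gaussianReal 0 b) ≤
      klDiv (gaussianReal 0 b) (gaussianReal 0 a) := by
  have hb : b ≠ 0 := (ha.pos.trans_le hab).ne'
  have ha' : (0 : ℝ) < a := by positivity
  have hb' : (0 : ℝ) < b := by positivity
  rw [klDiv_gaussianReal_zero ha hb, klDiv_gaussianReal_zero hb ha]
  apply ENNReal.ofReal_le_ofReal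
  have h := two_mul_log_le_sub_inv ((one_le_div ha').2 (NNReal.coe_le_coe.2 hab))
  rw [Real.log_div hb'.ne' ha'.ne', inv_div] at h
  linarith

/-- Corollary 1: any transmit power feasible under `D(p₁‖p₀) ≤ 2ε²` is also feasible
under `D(p₀‖p₁) ≤ 2ε²`. -/
theorem stmt_10 (σ2 : ℝ≥0) (hσ : 0 < σ2) (ε : ℝ) (hε : 0 < ε) :
    (∀ P : ℝ≥0,
      klDiv (gaussianReal 0 (P + σ2)) (gaussianReal 0 σ2) ≤ ENNReal.ofReal (2 * ε ^ 2) →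
        klDiv (gaussianReal 0 σ2) (gaussianReal 0 (P + σ2)) ≤ ENNReal.ofReal (2 * ε ^ 2)) ∧
    {P : ℝ≥0 |
        klDiv (gaussianReal 0 (P + σ2)) (gaussianReal 0 σ2) ≤ ENNReal.ofReal (2 * ε ^ 2)} ⊆
      {P : ℝ≥0 |
        klDiv (gaussianReal 0 σ2) (gaussianReal 0 (P + σ2)) ≤ ENNReal.ofReal (2 * ε ^ 2)} := by
  have hle (P : ℝ≥0) : klDiv (gaussianReal 0 σ2) (gaussianReal 0 (P + σ2)) ≤
      klDiv (gaussianReal 0 (P + σ2)) (gaussianReal 0 σ2) :=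
    klDiv_gaussianReal_zero_le_of_le hσ.ne' le_add_self
  exact ⟨fun P hP ↦ (hle P).trans hP, fun P hP ↦ (hle P).trans hP⟩
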